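/- Let a be an element of a non-commutative probability space (A, Ψ) (A a unital complex algebra, Ψ a unital linear functional). Then, as formal Laurent series in 1/z, the Cauchy transform of a with respect to [Ψ] satisfies G^{[Ψ]}_a(z) = −(G^Ψ_a)′(z)/G^Ψ_a(z), where G^{[Ψ]}_a(z) = 1/z + Σ_{n≥1} [Ψ](a^{⊗n})/z^{n+1} and G^Ψ_a(z) = 1/z + Σ_{n≥1} Ψ(aⁿ)/z^{n+1}. Equivalently, coefficientwise, [Ψ](a^{⊗n}) = Σ_{k=0}^{n} (n−k)·Ψ(a^k)·β^Ψ_{n−k}(a,…,a) for every n ≥ 1, where β^Ψ_m denotes the m-th Boolean cumulant of Ψ (with Ψ(a⁰) = 1). -/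

import Mathlib

open scoped BigOperators

namespace NCProb

variable {A : Type*} [Ring A] [Algebra ℂ A]

/-- Ordered sublist of the tuple `a` on the indices satisfying `P`. -/
noncomputable def ordList {n : ℕ} (a : Fin n → A) (P : Fin n → Prop) [DecidablePred P] :
    List A :=
  ((List.finRange n).filter fun i => decide (P i)).map a

/-- `(a, j)` is an alternating sequence for the pair of sets `(S₁, S₂)`:
`a i ∈ S₁` when `j i = false`, `a i ∈ S₂` when `j i = true`, and consecutive labels differ. -/
def Alternates {n : ℕ} (S₁ S₂ : Set A) (a : Fin n → A) (j : Fin n → Bool) : Prop :=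
  (∀ i, a i ∈ (if j i then S₂ else S₁)) ∧
    ∀ (i : ℕ) (h : i + 1 < n), j ⟨i, Nat.lt_of_succ_lt h⟩ ≠ j ⟨i + 1, h⟩

def IsTracial (ω : A →ₗ[ℂ] ℂ) : Prop := ∀ a b : A, ω (a * b) = ω (b * a)

/-- Freeness of a pair of subalgebras (given as sets) with respect to `Ψ`. -/
def IsFree (Ψ : A →ₗ[ℂ] ℂ) (S₁ S₂ : Set A) : Prop :=
  ∀ (n : ℕ) (a : Fin n → A) (j : Fin n → Bool),
    Alternates S₁ S₂ a j → (∀ i, Ψ (a i) = 0) → Ψ (List.ofFn a).prod = 0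

/-- Conditional freeness with respect to the pair `(Ψ, φ)`. -/
def IsCondFree (Ψ φ : A →ₗ[ℂ] ℂ) (S₁ S₂ : Set A) : Prop :=
  ∀ (n : ℕ) (a : Fin n → A) (j : Fin n → Bool),
    Alternates S₁ S₂ a j → (∀ i, Ψ (a i) = 0) →
      Ψ (List.ofFn a).prod = 0 ∧ φ (List.ofFn a).prod = ∏ i, φ (a i)

/-- Cyclic freeness with respect to the pair `(Ψ, ω)`. -/
def IsCyclicallyFree (Ψ ω : A →ₗ[ℂ] ℂ) (S₁ S₂ : Set A) : Prop :=
  IsFree Ψ S₁ S₂ ∧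
    ∀ (n : ℕ) (a : Fin n → A) (j : Fin n → Bool) (hn : 2 ≤ n),
      Alternates S₁ S₂ a j →
      j ⟨0, by omega⟩ ≠ j ⟨n - 1, by omega⟩ →
      (∀ i, Ψ (a i) = 0) → ω (List.ofFn a).prod = 0

/-- Infinitesimal freeness with respect to the pair `(Ψ, ω)`. -/
def IsInfFree (Ψ ω : A →ₗ[ℂ] ℂ) (S₁ S₂ : Set A) : Prop :=
  ∀ (n : ℕ) (a : Fin n → A) (j : Fin n → Bool),
    Alternates S₁ S₂ a j → (∀ i, Ψ (a i) = 0) →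
      Ψ (List.ofFn a).prod = 0 ∧
      ω (List.ofFn a).prod = ∑ i : Fin n, ω (a i) * Ψ (ordList a fun k => k ≠ i).prod

/-- Cyclic-conditional freeness with respect to the triple `(Ψ, φ, ω)`. -/
def IsCycCondFree (Ψ φ ω : A →ₗ[ℂ] ℂ) (S₁ S₂ : Set A) : Prop :=
  IsCondFree Ψ φ S₁ S₂ ∧
    ∀ (n : ℕ) (a : Fin n → A) (j : Fin n → Bool) (hn : 2 ≤ n),
      Alternates S₁ S₂ a j →
      j ⟨0, by omega⟩ ≠ j ⟨n - 1, by omega⟩ →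
      (∀ i, Ψ (a i) = 0) → ω (List.ofFn a).prod = ∏ i, φ (a i)

/-- Boolean cumulants (with explicit fuel), via the standard recursion
`φ(a₁⋯aₙ) = Σ_{k=1}^{n} β_k(a₁,…,a_k)·φ(a_{k+1}⋯aₙ)`. -/
noncomputable def booleanAux (φ : A →ₗ[ℂ] ℂ) : ℕ → List A → ℂ
  | 0, _ => 0
  | fuel + 1, l =>
      φ l.prod - ∑ k ∈ Finset.range (l.length - 1),
        booleanAux φ fuel (l.take (k + 1)) * φ (l.drop (k + 1)).prod

/-- The Boolean cumulant `β^φ(a₁,…,aₙ)` of the entries of the list `l = [a₁,…,aₙ]`. -/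
noncomputable def booleanCumulant (φ : A →ₗ[ℂ] ℂ) (l : List A) : ℂ :=
  booleanAux φ l.length l

/-- Product of the `Ψ`-moments of the gaps between consecutive elements of `V`. -/
noncomputable def gapFactor {n : ℕ} (Ψ : A →ₗ[ℂ] ℂ) (a : Fin n → A) (V : Finset (Fin n)) : ℂ :=
  (((V.sort (· ≤ ·)).zip (V.sort (· ≤ ·)).tail).map fun p =>
      Ψ (ordList a fun i => p.1 < i ∧ i < p.2).prod).prod

noncomputable def headProd {n : ℕ} (a : Fin n → A) (V : Finset (Fin n)) : A :=
  (ordList a fun i => ∀ v ∈ V, i < v).prod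

noncomputable def tailProd {n : ℕ} (a : Fin n → A) (V : Finset (Fin n)) : A :=
  (ordList a fun i => ∀ v ∈ V, v < i).prod

/-- Cumulants with respect to `(Ψ, θ)` with explicit fuel, defined through the
moment-cumulant recursion obtained by singling out the distinguished block `V`:
mode 0: free cumulants (`θ = Ψ`, the block `V` contains the first letter);
mode 1: infinitesimal free cumulants (wrap gap read in linear order `head·tail`);
mode 2: cyclic free cumulants (wrap gap read in cyclic order `tail·head`). -/
noncomputable def cumulAux (Ψ θ : A →ₗ[ℂ] ℂ) (mode : ℕ) : ℕ → List A → ℂ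
  | 0, _ => 0
  | fuel + 1, l =>
      θ l.prod - ∑ V : Finset (Fin l.length),
        if V.Nonempty ∧ V ≠ Finset.univ ∧ (mode ≠ 0 ∨ ∃ v ∈ V, (v : ℕ) = 0) then
          cumulAux Ψ θ mode fuel ((V.sort (· ≤ ·)).map l.get) *
            Ψ (if mode = 2 then tailProd l.get V * headProd l.get V
               else headProd l.get V * tailProd l.get V) *
            gapFactor Ψ l.get V
        else 0

/-- The free cumulant `κ^Ψ_n(a₁,…,aₙ)`. -/
noncomputable def freeCumulant (Ψ : A →ₗ[ℂ] ℂ) (l : List A) : ℂ :=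
  cumulAux Ψ Ψ 0 l.length l

/-- The infinitesimal free cumulant `∂κ^Ψ_n(a₁,…,aₙ)` of the pair `(Ψ, dΨ)`. -/
noncomputable def infCumulant (Ψ dΨ : A →ₗ[ℂ] ℂ) (l : List A) : ℂ :=
  cumulAux Ψ dΨ 1 l.length l

/-- The cyclic free cumulant `Dκ^Ψ_n(a₁,…,aₙ)` of the pair `(Ψ, dΨ)`. -/
noncomputable def cycCumulant (Ψ dΨ : A →ₗ[ℂ] ℂ) (l : List A) : ℂ :=
  cumulAux Ψ dΨ 2 l.length l

/-- Vanishing of mixed cumulants: `f` vanishes on mixed tuples from `S₁ ∪ S₂`. -/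
def MixedVanishes (f : List A → ℂ) (S₁ S₂ : Set A) : Prop :=
  ∀ (n : ℕ) (a : Fin n → A), 2 ≤ n → (∀ i, a i ∈ S₁ ∪ S₂) →
    (∃ k, a k ∈ S₁) → (∃ l, a l ∈ S₂) → f (List.ofFn a) = 0

/-- The value `[φ](a₁ ⊗ ⋯ ⊗ aₙ) = Σ_{1≤i₁<…<i_ℓ≤n} ∏_k β^φ`(cyclic pieces)`. -/
noncomputable def mkValue (φ : A →ₗ[ℂ] ℂ) {n : ℕ} (a : Fin n → A) : ℂ :=
  ∑ V : Finset (Fin n),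
    if V.Nonempty then
      (((V.sort (· ≤ ·)).zip (V.sort (· ≤ ·)).tail).map fun p =>
          booleanCumulant φ (ordList a fun i => p.1 ≤ i ∧ i < p.2)).prod *
        booleanCumulant φ
          ((ordList a fun i => ∀ v ∈ V, v ≤ i) ++ ordList a fun i => ∀ v ∈ V, i < v)
    else 0

/-- Non-crossing partitions of `{1,…,n}` encoded as finsets of blocks. -/
def IsNCPartition {n : ℕ} (P : Finset (Finset (Fin n))) : Prop :=
  (∀ B ∈ P, B.Nonempty) ∧
    (∀ i : Fin n, ∃! B, B ∈ P ∧ i ∈ B) ∧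
    ∀ B₁ ∈ P, ∀ B₂ ∈ P, ∀ p ∈ B₁, ∀ r ∈ B₁, ∀ q ∈ B₂, ∀ s ∈ B₂,
      p < q → q < r → r < s → B₁ = B₂

open scoped Classical in
/-- The value `⌞Ψ⌟(a₁⊗⋯⊗aₙ) = Σ_{π ∈ NC(n)} (n+1-|π|)·κ^Ψ_π(a₁,…,aₙ)`. -/
noncomputable def lsoulValue (Ψ : A →ₗ[ℂ] ℂ) {n : ℕ} (a : Fin n → A) : ℂ :=
  ∑ P : Finset (Finset (Fin n)),
    if IsNCPartition P then
      ((n : ℂ) + 1 - P.card) * ∏ B ∈ P, freeCumulant Ψ ((B.sort (· ≤ ·)).map a)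
    else 0

/-- `F` extends the linear functional `f` from `A` to the tensor algebra `T(A)`:
`F(a₁ ⊗ ⋯ ⊗ aₙ) = f(a₁⋯aₙ)`. -/
def ExtendsTo (f : A →ₗ[ℂ] ℂ) (F : TensorAlgebra ℂ A →ₗ[ℂ] ℂ) : Prop :=
  ∀ l : List A, l ≠ [] → F (l.map fun x => TensorAlgebra.ι ℂ x).prod = f l.prod

/-!
Cut the cyclic word `a₀ ⋯ aₙ₋₁` into blocks, let `x` be its first cut point and `y` its last one.
The block wrapping around the end of the word contributes `β(a_y, …, aₙ₋₁, a₀, …, aₓ₋₁)`. The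
other blocks form an arbitrary composition of the segment `aₓ ⋯ a_{y-1}`, and by the
moment–cumulant recursion their contributions add up to `Ψ(aₓ ⋯ a_{y-1})`. When all letters
equal `a`, a term depends only on `k = y - x`, and the wrapping block of length `n - k` has
`n - k` possible positions.
-/

section CutSets

theorem sum_powerset_eq_empty_add_sum_min {α M : Type*} [LinearOrder α] [AddCommMonoid M]
    (s : Finset α) (G : Finset α → M) :
    ∑ V ∈ s.powerset, G V =
      G ∅ + ∑ x ∈ s, ∑ V ∈ (s.filter (x < ·)).powerset, G (insert x V) := by
  induction s using Finset.induction_on_min with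
  | empty => simp
  | insert x s hlt ih =>
    have hx : x ∉ s := fun h => lt_irrefl x (hlt x h)
    have hfilter_min : (insert x s).filter (x < ·) = s := by
      rw [Finset.filter_insert, if_neg (lt_irrefl x), Finset.filter_true_of_mem hlt]
    have hfilter : ∀ y ∈ s, (insert x s).filter (y < ·) = s.filter (y < ·) := fun y hy => by
      rw [Finset.filter_insert, if_neg (hlt y hy).not_gt]
    rw [Finset.sum_powerset_insert hx, ih, Finset.sum_insert hx, hfilter_min, add_assoc,
      add_comm (∑ y ∈ s, _)]
    congr 2
    exact Finset.sum_congr rfl fun y hy => by rw [hfilter y hy]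

theorem sort_insert_of_forall_lt {α : Type*} [LinearOrder α] {x : α} {V : Finset α}
    (hV : ∀ v ∈ V, x < v) : (insert x V).sort (· ≤ ·) = x :: V.sort (· ≤ ·) :=
  Finset.sort_insert (r := (· ≤ ·)) (fun v hv => (hV v hv).le) fun hx => lt_irrefl x (hV x hx)

/-- The weight `b x₀ x₁ * b x₁ x₂ * ⋯ * b xₖ₋₁ xₖ * c xₖ` of the chain `x₀, x₁, …, xₖ`, where
`x₀ = x` and `l = [x₁, …, xₖ]`. The terminal factor `c` leaves room for the block that wraps
around a cyclic word. -/
def chainWeight {α R : Type*} [MulOneClass R] (b : α → α → R) (c : α → R) (x : α)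
    (l : List α) : R :=
  (((x :: l).zip l).map fun p => b p.1 p.2).prod * c ((x :: l).getLast (List.cons_ne_nil x l))

theorem chainWeight_nil {α R : Type*} [MulOneClass R] (b : α → α → R) (c : α → R) (x : α) :
    chainWeight b c x [] = c x := by
  simp [chainWeight]

theorem chainWeight_cons {α R : Type*} [Monoid R] (b : α → α → R) (c : α → R) (x y : α)
    (l : List α) :
    chainWeight b c x (y :: l) = b x y * chainWeight b c y l := by
  simp [chainWeight, mul_assoc]

variable {α R : Type*} [Semiring R] [LinearOrder α] [LocallyFiniteOrderTop α]

theorem sum_powerset_Ioi_chainWeight_eq_add_sum (b : α → α → R) (c : α → R) (x : α) :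
    ∑ V ∈ (Finset.Ioi x).powerset, chainWeight b c x (V.sort (· ≤ ·)) =
      c x + ∑ z ∈ Finset.Ioi x,
        b x z * ∑ V ∈ (Finset.Ioi z).powerset, chainWeight b c z (V.sort (· ≤ ·)) := by
  rw [sum_powerset_eq_empty_add_sum_min, Finset.sort_empty, chainWeight_nil]
  congr 1
  refine Finset.sum_congr rfl fun z hz => ?_
  have hfilter : (Finset.Ioi x).filter (z < ·) = Finset.Ioi z := by
    ext y
    simpa using (Finset.mem_Ioi.1 hz).trans
  rw [hfilter, Finset.mul_sum]
  refine Finset.sum_congr rfl fun V hV => ?_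
  have hlt : ∀ v ∈ V, z < v := fun _ hv => Finset.mem_Ioi.1 (Finset.mem_powerset.1 hV hv)
  rw [sort_insert_of_forall_lt hlt, chainWeight_cons]

theorem sum_powerset_Ioi_chainWeight [LocallyFiniteOrder α] {b m : α → α → R}
    (hm_self : ∀ x, m x x = 1)
    (hm : ∀ x y, x < y → m x y = ∑ z ∈ Finset.Ioc x y, b x z * m z y) (c : α → R) (x : α) :
    ∑ V ∈ (Finset.Ioi x).powerset, chainWeight b c x (V.sort (· ≤ ·)) =
      ∑ y ∈ Finset.Ici x, m x y * c y := by
  induction h : (Finset.Ioi x).card using Nat.strong_induction_on generalizing x with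
  | _ k ih =>
    have ih_of_lt : ∀ z ∈ Finset.Ioi x,
        ∑ V ∈ (Finset.Ioi z).powerset, chainWeight b c z (V.sort (· ≤ ·)) =
          ∑ y ∈ Finset.Ici z, m z y * c y := fun z hz =>
      ih _ (h ▸ Finset.card_lt_card (Finset.Ioi_ssubset_Ioi (Finset.mem_Ioi.1 hz))) z rfl
    calc ∑ V ∈ (Finset.Ioi x).powerset, chainWeight b c x (V.sort (· ≤ ·))
        = c x + ∑ z ∈ Finset.Ioi x, b x z * ∑ y ∈ Finset.Ici z, m z y * c y := by
          rw [sum_powerset_Ioi_chainWeight_eq_add_sum]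
          congr 1
          exact Finset.sum_congr rfl fun z hz => by rw [ih_of_lt z hz]
      _ = c x + ∑ y ∈ Finset.Ioi x, ∑ z ∈ Finset.Ioc x y, b x z * m z y * c y := by
          simp only [Finset.mul_sum, ← mul_assoc]
          congr 1
          refine Finset.sum_comm' fun z y => ?_
          simp only [Finset.mem_Ioi, Finset.mem_Ici, Finset.mem_Ioc]
          exact ⟨fun h => ⟨h, h.1.trans_le h.2⟩, And.left⟩
      _ = c x + ∑ y ∈ Finset.Ioi x, m x y * c y := by
          congr 1
          refine Finset.sum_congr rfl fun y hy => ?_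
          rw [hm x y (Finset.mem_Ioi.1 hy), Finset.sum_mul]
      _ = ∑ y ∈ Finset.Ici x, m x y * c y := by
          rw [Finset.Ici_eq_cons_Ioi, Finset.sum_cons, hm_self, one_mul]

end CutSets

section BooleanCumulants

variable (φ : A →ₗ[ℂ] ℂ)

theorem booleanAux_eq_booleanCumulant {fuel : ℕ} {l : List A} (hl : l.length ≤ fuel)
    (hne : l ≠ []) : booleanAux φ fuel l = booleanCumulant φ l := by
  induction fuel using Nat.strong_induction_on generalizing l with
  | _ fuel ih =>
    have hpos := List.length_pos_iff.2 hne
    obtain ⟨m, hm⟩ : ∃ m, l.length = m + 1 := ⟨l.length - 1, by omega⟩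
    obtain ⟨fuel, rfl⟩ : ∃ f, fuel = f + 1 := ⟨fuel - 1, by omega⟩
    rw [booleanCumulant, hm, booleanAux, booleanAux]
    congr 1
    refine Finset.sum_congr rfl fun k hk => ?_
    rw [Finset.mem_range] at hk
    have hlen : (l.take (k + 1)).length = k + 1 := List.length_take_of_le (by omega)
    have htake : l.take (k + 1) ≠ [] := List.ne_nil_of_length_eq_add_one hlen
    rw [ih fuel (by omega) (by omega) htake, ih m (by omega) (by omega) htake]

theorem moment_eq_sum_booleanCumulant (hφ : φ 1 = 1) {l : List A} (hne : l ≠ []) :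
    φ l.prod = ∑ k ∈ Finset.range l.length,
      booleanCumulant φ (l.take (k + 1)) * φ (l.drop (k + 1)).prod := by
  obtain ⟨m, hm⟩ : ∃ m, l.length = m + 1 :=
    Nat.exists_eq_succ_of_ne_zero (List.length_pos_iff.2 hne).ne'
  have hrec : booleanCumulant φ l = φ l.prod - ∑ k ∈ Finset.range m,
      booleanCumulant φ (l.take (k + 1)) * φ (l.drop (k + 1)).prod := by
    rw [booleanCumulant, hm, booleanAux, hm, Nat.add_sub_cancel]
    congr 1
    refine Finset.sum_congr rfl fun k hk => ?_
    rw [Finset.mem_range] at hk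
    have hlen : (l.take (k + 1)).length = k + 1 := List.length_take_of_le (by omega)
    rw [booleanAux_eq_booleanCumulant φ (by omega) (List.ne_nil_of_length_eq_add_one hlen)]
  rw [hm, Finset.sum_range_succ, List.take_of_length_le hm.le, List.drop_of_length_le hm.le,
    List.prod_nil, hφ, mul_one, hrec, add_sub_cancel]

theorem moment_extract_eq_sum_booleanCumulant (hφ : φ 1 = 1) (l : List A) {i j : ℕ}
    (hij : i < j) (hj : j ≤ l.length) :
    φ (l.extract i j).prod = ∑ k ∈ Finset.Ioc i j,
      booleanCumulant φ (l.extract i k) * φ (l.extract k j).prod := by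
  have hlen : (l.extract i j).length = j - i := by
    simp only [List.extract_eq_take_drop, List.length_take, List.length_drop]
    omega
  have hne : l.extract i j ≠ [] := List.length_pos_iff.1 (by omega)
  rw [moment_eq_sum_booleanCumulant φ hφ hne, hlen, ← Finset.Ico_add_one_add_one_eq_Ioc,
    Finset.sum_Ico_eq_sum_range, Nat.add_sub_add_right]
  refine Finset.sum_congr rfl fun k hk => ?_
  rw [Finset.mem_range] at hk
  simp only [List.extract_eq_take_drop, List.take_take, List.drop_take, List.drop_drop]
  rw [min_eq_left (by omega), show i + 1 + k = i + (k + 1) by omega, Nat.add_sub_cancel_left,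
    Nat.sub_sub]

end BooleanCumulants

section CyclicCutting

theorem ordList_eq_extract {B : Type*} {n : ℕ} (a : Fin n → B) {P : Fin n → Prop} [DecidablePred P]
    {i j : ℕ} (hP : ∀ k : Fin n, P k ↔ i ≤ k ∧ k < j) :
    ordList a P = (List.ofFn a).extract i j := by
  have hfilter : (List.finRange n).filter (fun k => decide (P k)) =
      (List.finRange n).extract i j := by
    refine (List.Pairwise.sortedLT ((List.pairwise_lt_finRange n).filter _)).eq_of_mem_iff
      ((List.pairwise_lt_finRange n).drop.take).sortedLT fun k => ?_
    rw [List.mem_filter, List.mem_take_iff_getElem, decide_eq_true_iff, hP]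
    simp only [List.mem_finRange, true_and, List.getElem_drop, List.getElem_finRange,
      List.length_drop, List.length_finRange, Fin.ext_iff, Fin.cast_mk]
    constructor
    · rintro ⟨hik, hkj⟩
      exact ⟨k - i, by omega, by omega⟩
    · rintro ⟨d, hd, hk⟩
      omega
  rw [ordList, hfilter, List.map_take, List.map_drop, List.ofFn_eq_map]

theorem forall_mem_le_iff_getLast_le {α : Type*} [LinearOrder α] {V : Finset α} {x i : α}
    {l : List α} (hV : V.sort (· ≤ ·) = x :: l) :
    (∀ v ∈ V, v ≤ i) ↔ (x :: l).getLast (List.cons_ne_nil x l) ≤ i := by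
  simp only [← Finset.mem_sort (s := V) (· ≤ ·), hV]
  have hsorted : (x :: l).Pairwise (· ≤ ·) := hV ▸ V.pairwise_sort (· ≤ ·)
  exact ⟨fun h => h _ (List.getLast_mem _), fun h v hv => (hsorted.rel_getLast hv).trans h⟩

theorem forall_lt_mem_iff_lt_head {α : Type*} [LinearOrder α] {V : Finset α} {x i : α}
    {l : List α} (hV : V.sort (· ≤ ·) = x :: l) :
    (∀ v ∈ V, i < v) ↔ i < x := by
  simp only [← Finset.mem_sort (s := V) (· ≤ ·), hV]
  have hsorted : (x :: l).Pairwise (· ≤ ·) := hV ▸ V.pairwise_sort (· ≤ ·)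
  exact ⟨fun h => h x List.mem_cons_self,
    fun h v hv => h.trans_le
      ((List.mem_cons.1 hv).elim ge_of_eq (List.rel_of_pairwise_cons hsorted))⟩

/-- The product of the Boolean cumulants of the blocks into which the cut points `V` divide the
cyclic word `a`, a block starting at each cut point. It is the summand of `mkValue φ a` at a
nonempty `V`; the last factor belongs to the block that wraps around the end of the word. -/
noncomputable def cyclicBooleanProduct (φ : A →ₗ[ℂ] ℂ) {n : ℕ} (a : Fin n → A)
    (V : Finset (Fin n)) : ℂ :=
  (((V.sort (· ≤ ·)).zip (V.sort (· ≤ ·)).tail).map fun p =>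
      booleanCumulant φ (ordList a fun i => p.1 ≤ i ∧ i < p.2)).prod *
    booleanCumulant φ
      ((ordList a fun i => ∀ v ∈ V, v ≤ i) ++ ordList a fun i => ∀ v ∈ V, i < v)

theorem cyclicBooleanProduct_eq_chainWeight (φ : A →ₗ[ℂ] ℂ) {n : ℕ} (a : Fin n → A)
    {V : Finset (Fin n)} {x : Fin n} {l : List (Fin n)} (hV : V.sort (· ≤ ·) = x :: l) :
    cyclicBooleanProduct φ a V =
      chainWeight (fun y z : Fin n => booleanCumulant φ ((List.ofFn a).extract y z))
        (fun y : Fin n => booleanCumulant φ ((List.ofFn a).drop y ++ (List.ofFn a).take x))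
        x l := by
  have hgap : ∀ y z : Fin n, ordList a (fun i => y ≤ i ∧ i < z) = (List.ofFn a).extract y z :=
    fun y z => ordList_eq_extract a fun _ => Iff.rfl
  have htail : ordList a (fun i => ∀ v ∈ V, v ≤ i) =
      (List.ofFn a).drop ((x :: l).getLast (List.cons_ne_nil x l)) := by
    rw [ordList_eq_extract a (j := n) fun i => (forall_mem_le_iff_getLast_le hV).trans
      (iff_self_and.2 fun _ => i.2)]
    exact List.take_of_length_le (by simp)
  have hhead : ordList a (fun i => ∀ v ∈ V, i < v) = (List.ofFn a).take x :=
    ordList_eq_extract a (i := 0) fun i => (forall_lt_mem_iff_lt_head hV).trans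
      (iff_and_self.2 fun _ => Nat.zero_le _)
  rw [cyclicBooleanProduct, htail, hhead, hV, chainWeight, List.tail_cons]
  simp only [hgap]

theorem mkValue_eq_sum_cyclicBooleanProduct (φ : A →ₗ[ℂ] ℂ) {n : ℕ} (a : Fin n → A) :
    mkValue φ a = ∑ x : Fin n, ∑ V ∈ (Finset.Ioi x).powerset,
      cyclicBooleanProduct φ a (insert x V) := by
  calc mkValue φ a
      = ∑ V ∈ Finset.univ.powerset, if V.Nonempty then cyclicBooleanProduct φ a V else 0 := by
        rw [Finset.powerset_univ]
        rfl
    _ = _ := by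
        rw [sum_powerset_eq_empty_add_sum_min, if_neg Finset.not_nonempty_empty, zero_add]
        simp only [Finset.insert_nonempty, if_true, Finset.filter_lt_eq_Ioi]

theorem mkValue_eq_sum_moment_mul_booleanCumulant (φ : A →ₗ[ℂ] ℂ) (hφ : φ 1 = 1) {n : ℕ}
    (a : Fin n → A) :
    mkValue φ a = ∑ x : Fin n, ∑ y ∈ Finset.Ici x,
      φ ((List.ofFn a).extract x y).prod *
        booleanCumulant φ ((List.ofFn a).drop y ++ (List.ofFn a).take x) := by
  have hself : ∀ x : Fin n, φ ((List.ofFn a).extract x x).prod = 1 := by simp [hφ]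
  have hrec : ∀ x y : Fin n, x < y → φ ((List.ofFn a).extract x y).prod =
      ∑ z ∈ Finset.Ioc x y, booleanCumulant φ ((List.ofFn a).extract x z) *
        φ ((List.ofFn a).extract z y).prod := fun x y hxy => by
    rw [moment_extract_eq_sum_booleanCumulant φ hφ _ hxy (by simp [y.2.le]),
      ← Fin.map_valEmbedding_Ioc, Finset.sum_map]
    rfl
  rw [mkValue_eq_sum_cyclicBooleanProduct]
  refine Finset.sum_congr rfl fun x _ => ?_
  rw [← sum_powerset_Ioi_chainWeight hself hrec]
  exact Finset.sum_congr rfl fun V hV => cyclicBooleanProduct_eq_chainWeight φ a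
    (sort_insert_of_forall_lt fun _ hv => Finset.mem_Ioi.1 (Finset.mem_powerset.1 hV hv))

theorem mkValue_const (φ : A →ₗ[ℂ] ℂ) (hφ : φ 1 = 1) (n : ℕ) (a : A) :
    mkValue φ (fun _ : Fin n => a) = ∑ x : Fin n, ∑ y ∈ Finset.Ici x,
      φ (a ^ (y - x : ℕ)) * booleanCumulant φ (List.replicate (n - (y - x)) a) := by
  rw [mkValue_eq_sum_moment_mul_booleanCumulant φ hφ]
  refine Finset.sum_congr rfl fun x _ => Finset.sum_congr rfl fun y hy => ?_
  have hxy : (x : ℕ) ≤ y := Fin.le_def.1 (Finset.mem_Ici.1 hy)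
  have hpath : (List.replicate n a).extract x y = List.replicate (y - x) a := by
    rw [List.extract_eq_take_drop, List.drop_replicate, List.take_replicate,
      min_eq_left (by omega)]
  have hwrap : (List.replicate n a).drop y ++ (List.replicate n a).take x =
      List.replicate (n - (y - x)) a := by
    rw [List.drop_replicate, List.take_replicate, List.replicate_append_replicate,
      min_eq_left (by omega), show n - (y : ℕ) + x = n - (y - x) by omega]
  rw [List.ofFn_const, hpath, hwrap, List.prod_replicate]

end CyclicCutting

theorem sum_fin_sum_Ici_sub {M : Type*} [AddCommMonoid M] (n : ℕ) (f : ℕ → M) :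
    ∑ x : Fin n, ∑ y ∈ Finset.Ici x, f (y - x) = ∑ k ∈ Finset.range n, (n - k) • f k := by
  calc ∑ x : Fin n, ∑ y ∈ Finset.Ici x, f (y - x)
      = ∑ x ∈ Finset.range n, ∑ k ∈ Finset.range (n - x), f k := by
        rw [← Fin.sum_univ_eq_sum_range (fun x => ∑ k ∈ Finset.range (n - x), f k)]
        refine Finset.sum_congr rfl fun x _ => ?_
        refine (Finset.sum_map (Finset.Ici x) Fin.valEmbedding fun y => f (y - x)).symm.trans ?_
        rw [Fin.map_valEmbedding_Ici, Finset.sum_Ico_eq_sum_range]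
        simp only [Nat.add_sub_cancel_left]
    _ = ∑ k ∈ Finset.range n, ∑ _x ∈ Finset.range (n - k), f k :=
        Finset.sum_comm' fun x k => by simp only [Finset.mem_range]; omega
    _ = ∑ k ∈ Finset.range n, (n - k) • f k := by
        simp only [Finset.sum_const, Finset.card_range]

/-- the inverse Markov–Krein transform relation
`[Ψ](a^{⊗n}) = Σ_{k=0}^{n} (n−k)·Ψ(a^k)·β^Ψ_{n−k}(a,…,a)`, which is the
coefficientwise form of `G^{[Ψ]}_a(z) = −(G^Ψ_a)'(z)/G^Ψ_a(z)`. -/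
theorem mkValue_powers_eq
    {A : Type*} [Ring A] [Algebra ℂ A]
    (Ψ : A →ₗ[ℂ] ℂ) (hΨ1 : Ψ 1 = 1) (a : A) :
    ∀ n : ℕ, 1 ≤ n →
      mkValue Ψ (fun _ : Fin n => a) =
        ∑ k ∈ Finset.range (n + 1),
          ((n : ℂ) - (k : ℂ)) * Ψ (a ^ k) *
            booleanCumulant Ψ (List.replicate (n - k) a) := by
  intro n _
  calc mkValue Ψ (fun _ : Fin n => a)
      = ∑ x : Fin n, ∑ y ∈ Finset.Ici x,
          Ψ (a ^ (y - x : ℕ)) * booleanCumulant Ψ (List.replicate (n - (y - x)) a) :=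
        mkValue_const Ψ hΨ1 n a
    _ = ∑ k ∈ Finset.range n,
          (n - k) • (Ψ (a ^ k) * booleanCumulant Ψ (List.replicate (n - k) a)) :=
        sum_fin_sum_Ici_sub n fun k => Ψ (a ^ k) * booleanCumulant Ψ (List.replicate (n - k) a)
    _ = ∑ k ∈ Finset.range (n + 1), ((n : ℂ) - (k : ℂ)) * Ψ (a ^ k) *
          booleanCumulant Ψ (List.replicate (n - k) a) := by
        rw [Finset.sum_range_succ, sub_self, zero_mul, zero_mul, add_zero]
        refine Finset.sum_congr rfl fun k hk => ?_
        rw [nsmul_eq_mul, Nat.cast_sub (Finset.mem_range.1 hk).le, mul_assoc]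

end NCProb
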